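/- Let L be a complete lattice with an orthocomplementation x ↦ xᗮ (satisfying x ⊓ xᗮ = ⊥, x ⊔ xᗮ = ⊤, antitonicity, and involutivity), and let y, z ∈ L satisfy y ≠ ⊥, y ≠ ⊤, and y ⊓ z = y ⊓ zᗮ = yᗮ ⊓ z = yᗮ ⊓ zᗮ = ⊥. Set B_z := {⊥, z, zᗮ, ⊤}. Then δ_{B_z}(y) = ⊤, δ_{B_z}(yᗮ) = ⊤, and δ_{B_z}(y ⊓ yᗮ) = ⊥; in particular δ_{B_z}(y) ⊓ δ_{B_z}(yᗮ) ≠ δ_{B_z}(y ⊓ yᗮ). -/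

import Mathlib

/-- The daseinisation of `x` to a subset `B` of a complete lattice:
`δ_B(x) := sInf {y ∈ B | x ≤ y}`. -/
def das {L : Type*} [CompleteLattice L] (B : Set L) (x : L) : L :=
  sInf {y ∈ B | x ≤ y}

section

variable {L : Type*} [CompleteLattice L] {B : Set L} {x y : L}

theorem le_das : x ≤ das B x :=
  le_sInf fun _ hb => hb.2

theorem das_eq_self_of_mem (hx : x ∈ B) : das B x = x :=
  le_antisymm (sInf_le ⟨hx, le_rfl⟩) le_das

theorem das_eq_top_iff : das B x = ⊤ ↔ ∀ b ∈ B, x ≤ b → b = ⊤ := by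
  simp only [das, sInf_eq_top, Set.mem_ofPred_eq, and_imp]

theorem das_eq_top_of_disjoint (hx : x ≠ ⊥) (hxB : ∀ b ∈ B, b ≠ ⊤ → Disjoint x b) :
    das B x = ⊤ := by
  refine das_eq_top_iff.2 fun b hb hxb => ?_
  by_contra hb_top
  exact hx ((hxB b hb hb_top).eq_bot_of_le hxb)

theorem das_noncommuting_example_general (hx : x ≠ ⊥) (hy : y ≠ ⊥) (hxy : Disjoint x y)
    (hB : ⊥ ∈ B) (hxB : ∀ b ∈ B, b ≠ ⊤ → Disjoint x b) (hyB : ∀ b ∈ B, b ≠ ⊤ → Disjoint y b) :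
    das B x = ⊤ ∧ das B y = ⊤ ∧ das B (x ⊓ y) = ⊥ ∧ das B x ⊓ das B y ≠ das B (x ⊓ y) := by
  have das_x : das B x = ⊤ := das_eq_top_of_disjoint hx hxB
  have das_y : das B y = ⊤ := das_eq_top_of_disjoint hy hyB
  have das_inf : das B (x ⊓ y) = ⊥ := by rw [hxy.eq_bot, das_eq_self_of_mem hB]
  refine ⟨das_x, das_y, das_inf, ?_⟩
  rw [das_x, das_y, das_inf, inf_top_eq]
  exact ne_bot_of_le_ne_bot hx le_top

end

/-- If `y` is noncommuting with `z` in the strong sense that all four meets of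
`y, yᗮ` with `z, zᗮ` vanish, then daseinisation to `B_z := {⊥, z, zᗮ, ⊤}` sends
both `y` and `yᗮ` to `⊤` but `y ⊓ yᗮ` to `⊥`. -/
theorem das_noncommuting_example {L : Type*} [CompleteLattice L] (oc : L → L)
    (h_inf : ∀ x : L, x ⊓ oc x = ⊥) (h_sup : ∀ x : L, x ⊔ oc x = ⊤)
    (h_anti : ∀ x y : L, x ≤ y → oc y ≤ oc x) (h_inv : ∀ x : L, oc (oc x) = x)
    (y z : L) (hy_bot : y ≠ ⊥) (hy_top : y ≠ ⊤)
    (h1 : y ⊓ z = ⊥) (h2 : y ⊓ oc z = ⊥) (h3 : oc y ⊓ z = ⊥) (h4 : oc y ⊓ oc z = ⊥) :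
    das {⊥, z, oc z, ⊤} y = ⊤ ∧
    das {⊥, z, oc z, ⊤} (oc y) = ⊤ ∧
    das {⊥, z, oc z, ⊤} (y ⊓ oc y) = ⊥ ∧
    das {⊥, z, oc z, ⊤} y ⊓ das {⊥, z, oc z, ⊤} (oc y) ≠ das {⊥, z, oc z, ⊤} (y ⊓ oc y) := by
  have hoy : oc y ≠ ⊥ := fun h => hy_top (by simpa only [h, sup_bot_eq] using h_sup y)
  refine das_noncommuting_example_general hy_bot hoy (disjoint_iff.2 (h_inf y)) (.inl rfl) ?_ ?_
  · simp [disjoint_iff, h1, h2]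
  · simp [disjoint_iff, h3, h4]
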